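/- Let E and F be real Hilbert spaces, let c′ > 0, let A ⊆ E be an unbounded set with μ(A) ≥ 1/c′, and let f : A → F be an ε-nearisometry for some ε ≥ 0. Then there exist a linear isometry U : E → F and a vector w ∈ U(E) such that, with T x = U x + w (an isometry of E onto the closed linear subspace U(E) of F, translated by w ∈ U(E)) and P : F → U(E) the orthogonal projection, |P(f x) − T x| ≤ √2·c′·ε for all x ∈ A. -/

import Mathlib

open Filter Metric Bornology RealInnerProductSpace

/-- `f` is an `ε`-nearisometry on `A`. -/
def IsNearisometryOn {E F : Type*} [NormedAddCommGroup E] [NormedAddCommGroup F]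
    (f : E → F) (A : Set E) (ε : ℝ) : Prop :=
  ∀ x ∈ A, ∀ y ∈ A, |‖f x - f y‖ - ‖x - y‖| ≤ ε

/-- `u` is a cluster direction of `A`. -/
def IsClusterDirection {E : Type*} [NormedAddCommGroup E] [NormedSpace ℝ E]
    (A : Set E) (u : E) : Prop :=
  ∃ x : ℕ → E, (∀ j, x j ∈ A) ∧ Tendsto (fun j => ‖x j‖) atTop atTop ∧
    Tendsto (fun j => ‖x j‖⁻¹ • x j) atTop (nhds u)

/-- `μ(A) = μ₁(cd A)`, where `μ₁(X) = inf_{|e|=1} sup {|u ⬝ e| : u ∈ X}` (with `sup ∅ = 0`,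
as is the convention for `Real.sSup`). -/
noncomputable def muDir {E : Type*} [NormedAddCommGroup E] [InnerProductSpace ℝ E]
    (A : Set E) : ℝ :=
  sInf {s | ∃ e : E, ‖e‖ = 1 ∧
    s = sSup {t | ∃ u, IsClusterDirection A u ∧ t = abs ⟪u, e⟫}}

/-- The orthogonal projection of `F` onto the (closed) range `U(E)` of a linear isometry
`U : E →ₗᵢ[ℝ] F` from a complete space, as a map `F → F`. -/
noncomputable def projOntoRange {E F : Type*} [NormedAddCommGroup E] [NormedSpace ℝ E]
    [CompleteSpace E] [NormedAddCommGroup F] [InnerProductSpace ℝ F]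
    (U : E →ₗᵢ[ℝ] F) (v : F) : F :=
  haveI : CompleteSpace (⊤ : Submodule ℝ E) :=
    completeSpace_coe_iff_isComplete.2 (by simpa using completeSpace_iff_isComplete_univ.1 ‹_›)
  haveI : CompleteSpace (Submodule.map U.toLinearMap (⊤ : Submodule ℝ E)) :=
    U.completeSpace_map ⊤
  (Submodule.orthogonalProjectionOnto (Submodule.map U.toLinearMap ⊤) v : F)

/-- Jung's theorem in Hilbert spaces. -/
theorem jung_aux {H : Type*} [NormedAddCommGroup H] [InnerProductSpace ℝ H] [CompleteSpace H]
    (S : Set H) (hS : S.Nonempty) (d : ℝ) (hd : ∀ s ∈ S, ∀ t ∈ S, ‖s - t‖ ≤ d) :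
    ∃ c : H, ∀ s ∈ S, 2 * ‖s - c‖ ^ 2 ≤ d ^ 2 := by
  obtain ⟨s₀, hs₀⟩ := hS
  set R : Set ℝ := {B | ∃ z : H, ∀ s ∈ S, ‖s - z‖ ^ 2 ≤ B} with hR
  have hRbdd : BddBelow R := ⟨0, by
    rintro B ⟨z, hz⟩
    exact (sq_nonneg _).trans (hz s₀ hs₀)⟩
  have hRne : R.Nonempty := ⟨d ^ 2, s₀, fun s hs => by
    have := hd s hs s₀ hs₀
    gcongr⟩
  set ρ := sInf R with hρ
  have hle : ∀ B z, (∀ s ∈ S, ‖s - z‖ ^ 2 ≤ B) → ρ ≤ B := fun B z h => csInf_le hRbdd ⟨z, h⟩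
  have key : ∀ n : ℕ, ∃ z : H, ∀ s ∈ S, ‖s - z‖ ^ 2 ≤ ρ + 1 / ((n : ℝ) + 1) := by
    intro n
    have hpos : (0 : ℝ) < 1 / ((n : ℝ) + 1) := by positivity
    obtain ⟨B, ⟨z, hz⟩, hB⟩ := exists_lt_of_csInf_lt hRne
      (show sInf R < ρ + 1 / ((n : ℝ) + 1) by linarith)
    exact ⟨z, fun s hs => (hz s hs).trans hB.le⟩
  choose z hz using key
  have hconv : ∀ (a b s : H) (t : ℝ), ‖s - ((1 - t) • a + t • b)‖ ^ 2
      = (1 - t) * ‖s - a‖ ^ 2 + t * ‖s - b‖ ^ 2 - t * (1 - t) * ‖b - a‖ ^ 2 := by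
    intro a b s t
    have e1 : s - ((1 - t) • a + t • b) = (1 - t) • (s - a) + t • (s - b) := by module
    have e2 : b - a = (s - a) - (s - b) := by abel
    rw [e1, e2, norm_add_sq_real, norm_sub_sq_real (s - a) (s - b), norm_smul, norm_smul, mul_pow, mul_pow,
      inner_smul_left, inner_smul_right, Real.norm_eq_abs, Real.norm_eq_abs, sq_abs, sq_abs]
    simp only [conj_trivial]
    ring
  have hcau : CauchySeq z := by
    rw [cauchySeq_iff_tendsto_dist_atTop_0]
    have hb : ∀ p : ℕ × ℕ, dist (z p.1) (z p.2) ^ 2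
        ≤ 2 * (1 / ((p.1 : ℝ) + 1) + 1 / ((p.2 : ℝ) + 1)) := by
      intro p
      have h := hle ((1 - 1/2 : ℝ) * (ρ + 1 / ((p.2 : ℝ) + 1)) + (1/2) * (ρ + 1 / ((p.1 : ℝ) + 1))
        - (1/2) * (1 - 1/2) * ‖z p.1 - z p.2‖ ^ 2) ((1 - 1/2 : ℝ) • z p.2 + (1/2 : ℝ) • z p.1) (by
          intro s hs
          rw [hconv]
          have := hz p.1 s hs
          have := hz p.2 s hs
          linarith)
      rw [dist_eq_norm]
      linarith
    have h1 : Tendsto (fun p : ℕ × ℕ => 2 * (1 / ((p.1 : ℝ) + 1) + 1 / ((p.2 : ℝ) + 1)))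
        atTop (nhds 0) := by
      have h0 := tendsto_one_div_add_atTop_nhds_zero_nat (𝕜 := ℝ)
      rw [← prod_atTop_atTop_eq]
      have := ((h0.comp (tendsto_fst (f := (atTop : Filter ℕ)) (g := (atTop : Filter ℕ)))).add
        (h0.comp (tendsto_snd (f := (atTop : Filter ℕ)) (g := (atTop : Filter ℕ))))).const_mul 2
      simpa using this
    have h2 : Tendsto (fun p : ℕ × ℕ => dist (z p.1) (z p.2) ^ 2) atTop (nhds 0) :=
      squeeze_zero (fun p => sq_nonneg _) hb h1
    have h3 := (Real.continuous_sqrt.tendsto 0).comp h2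
    simpa [Function.comp_def, Real.sqrt_sq dist_nonneg] using h3
  obtain ⟨c, hc⟩ := cauchySeq_tendsto_of_complete hcau
  have hcρ : ∀ s ∈ S, ‖s - c‖ ^ 2 ≤ ρ := by
    intro s hs
    have h0 := (tendsto_one_div_add_atTop_nhds_zero_nat (𝕜 := ℝ)).const_add ρ
    rw [add_zero] at h0
    exact le_of_tendsto_of_tendsto' ((hc.const_sub s).norm.pow 2) h0 (fun n => hz n s hs)
  refine ⟨c, fun s hs => ?_⟩
  have hN := hcρ s hs
  by_contra! hcon
  have hmain : ∀ t : ℝ, 0 < t → t < 1 → ρ ≤ d ^ 2 - (1 - t) * ‖s - c‖ ^ 2 := by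
    intro t ht ht1
    have h := hle ((1 - t) * ρ + t * d ^ 2 - t * (1 - t) * ‖s - c‖ ^ 2) ((1 - t) • c + t • s) (by
      intro y hy
      rw [hconv]
      have h1 := mul_le_mul_of_nonneg_left (hcρ y hy) (by linarith : 0 ≤ 1 - t)
      have h2 : ‖y - s‖ ^ 2 ≤ d ^ 2 := by
        have := hd y hy s hs
        gcongr
      have h3 := mul_le_mul_of_nonneg_left h2 ht.le
      linarith)
    have : t * ρ ≤ t * (d ^ 2 - (1 - t) * ‖s - c‖ ^ 2) := by linarith
    exact le_of_mul_le_mul_left this ht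
  set N := ‖s - c‖ ^ 2
  have hNpos : 0 < N := by nlinarith [sq_nonneg d]
  set t := (2 * N - d ^ 2) / (2 * N) / 2 with ht
  have htN : t * N * 4 = 2 * N - d ^ 2 := by rw [ht]; field_simp; ring
  have ht0 : 0 < t := by rw [ht]; have : 0 < 2 * N - d ^ 2 := by linarith
                         positivity
  have ht1 : t < 1 := by
    by_contra! h
    nlinarith [sq_nonneg d]
  have := hmain t ht0 ht1
  nlinarith

theorem busemann_aux {H : Type*} [NormedAddCommGroup H] [InnerProductSpace ℝ H]
    (r : ℕ → ℝ) (hr : Tendsto r atTop (nhds 0)) (hr0 : ∀ᶠ j in atTop, 0 < r j)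
    (z : ℕ → H) (u : H) (hu : ‖u‖ = 1) (hz : Tendsto (fun j => r j • z j) atTop (nhds u)) (x y : H) :
    Tendsto (fun j => ‖z j - x‖ - ‖z j - y‖) atTop (nhds ⟪u, y - x⟫) := by
  have hden : ∀ x : H, Tendsto (fun j => ‖r j • z j - r j • x‖) atTop (nhds 1) := by
    intro x
    have := (hz.sub (hr.smul_const x)).norm
    simpa [hu] using this
  have hnum : Tendsto (fun j => 2 * ⟪r j • z j, y - x⟫ + r j * (‖x‖ ^ 2 - ‖y‖ ^ 2)) atTop
      (nhds (2 * ⟪u, y - x⟫ + 0 * (‖x‖ ^ 2 - ‖y‖ ^ 2))) :=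
    ((hz.inner tendsto_const_nhds).const_mul 2).add (hr.mul_const _)
  have hsum := (hden x).add (hden y)
  have hq := hnum.div hsum (by norm_num)
  have e : (2 * ⟪u, y - x⟫ + 0 * (‖x‖ ^ 2 - ‖y‖ ^ 2)) / (1 + 1) = ⟪u, y - x⟫ := by ring
  rw [e] at hq
  refine hq.congr' ?_
  have hpos : ∀ᶠ j in atTop, 0 < ‖r j • z j - r j • x‖ + ‖r j • z j - r j • y‖ :=
    hsum.eventually (lt_mem_nhds (by norm_num))
  filter_upwards [hr0, hpos] with j hj hp
  simp only [Pi.div_apply]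
  rw [div_eq_iff hp.ne']
  rw [← smul_sub, ← smul_sub, norm_smul, norm_smul, Real.norm_of_nonneg hj.le]
  have h1 := norm_sub_sq_real (z j) x
  have h2 := norm_sub_sq_real (z j) y
  rw [inner_smul_left, inner_sub_right]
  simp only [conj_trivial]
  linear_combination r j * (h2 - h1)

theorem inner_lim_aux {E F : Type*}
    [NormedAddCommGroup E] [InnerProductSpace ℝ E]
    [NormedAddCommGroup F] [InnerProductSpace ℝ F]
    (A : Set E) (f : E → F) (ε : ℝ) (hε : 0 ≤ ε) (hf : IsNearisometryOn f A ε)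
    (a : E) (ha : a ∈ A) {ι : Type*} (l : Filter ι) (x y : ι → E)
    (hxA : ∀ i, x i ∈ A) (hyA : ∀ i, y i ∈ A)
    (hx : Tendsto (fun i => ‖x i‖) l atTop) (hy : Tendsto (fun i => ‖y i‖) l atTop)
    (u v : E) (hu : Tendsto (fun i => ‖x i‖⁻¹ • x i) l (nhds u))
    (hv : Tendsto (fun i => ‖y i‖⁻¹ • y i) l (nhds v)) :
    Tendsto (fun i => ⟪‖x i‖⁻¹ • (f (x i) - f a), ‖y i‖⁻¹ • (f (y i) - f a)⟫) l
      (nhds ⟪u, v⟫) := by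
  have hr := tendsto_inv_atTop_zero.comp hx
  have hs := tendsto_inv_atTop_zero.comp hy
  simp only [Function.comp_def] at hr hs
  have h1 : Tendsto (fun i => ⟪‖x i‖⁻¹ • (x i - a), ‖y i‖⁻¹ • (y i - a)⟫) l (nhds ⟪u, v⟫) := by
    have := (hu.sub (hr.smul_const a)).inner (𝕜 := ℝ) (hv.sub (hs.smul_const a))
    simpa [smul_sub] using this
  have hsq : ∀ p ∈ A, ∀ q ∈ A, |‖f p - f q‖ ^ 2 - ‖p - q‖ ^ 2| ≤ ε * (2 * ‖p - q‖ + ε) := by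
    intro p hp q hq
    have h := hf p hp q hq
    have e : ‖f p - f q‖ ^ 2 - ‖p - q‖ ^ 2
      = (‖f p - f q‖ - ‖p - q‖) * (2 * ‖p - q‖ + (‖f p - f q‖ - ‖p - q‖)) := by ring
    rw [e, abs_mul]
    have h2 : |2 * ‖p - q‖ + (‖f p - f q‖ - ‖p - q‖)| ≤ 2 * ‖p - q‖ + ε := by
      refine (abs_add_le _ _).trans ?_
      rw [abs_of_nonneg (by positivity)]
      linarith
    exact mul_le_mul h h2 (abs_nonneg _) hε
  have hb : ∀ p ∈ A, ∀ q ∈ A, |⟪f p - f a, f q - f a⟫ - ⟪p - a, q - a⟫|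
      ≤ ε * (2 * ‖p‖ + 2 * ‖q‖ + (2 * ‖a‖ + 2 * ε)) := by
    intro p hp q hq
    have e1 := norm_sub_sq_real (f p - f a) (f q - f a)
    have e2 := norm_sub_sq_real (p - a) (q - a)
    rw [sub_sub_sub_cancel_right] at e1 e2
    have b1 := abs_le.1 (hsq p hp q hq)
    have b2 := abs_le.1 (hsq p hp a ha)
    have b3 := abs_le.1 (hsq q hq a ha)
    have n1 := mul_le_mul_of_nonneg_left (norm_sub_le p q) hε
    have n2 := mul_le_mul_of_nonneg_left (norm_sub_le p a) hε
    have n3 := mul_le_mul_of_nonneg_left (norm_sub_le q a) hε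
    rw [abs_le]
    constructor <;> nlinarith [mul_nonneg hε hε]
  have h0 : Tendsto (fun i => ⟪‖x i‖⁻¹ • (f (x i) - f a), ‖y i‖⁻¹ • (f (y i) - f a)⟫
      - ⟪‖x i‖⁻¹ • (x i - a), ‖y i‖⁻¹ • (y i - a)⟫) l (nhds 0) := by
    have hlim : Tendsto (fun i => ε * (2 * ‖y i‖⁻¹ + 2 * ‖x i‖⁻¹ +
        (‖x i‖⁻¹ * ‖y i‖⁻¹) * (2 * ‖a‖ + 2 * ε))) l (nhds 0) := by
      have := (((hs.const_mul 2).add (hr.const_mul 2)).add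
        ((hr.mul hs).mul_const (2 * ‖a‖ + 2 * ε))).const_mul ε
      simpa using this
    refine squeeze_zero_norm' ?_ hlim
    filter_upwards [hx.eventually (eventually_gt_atTop 0), hy.eventually (eventually_gt_atTop 0)]
      with i hi hj
    have h := hb _ (hxA i) _ (hyA i)
    simp only [inner_smul_left, inner_smul_right, conj_trivial]
    rw [Real.norm_eq_abs]
    have e : ‖x i‖⁻¹ * (‖y i‖⁻¹ * ⟪f (x i) - f a, f (y i) - f a⟫)
        - ‖x i‖⁻¹ * (‖y i‖⁻¹ * ⟪x i - a, y i - a⟫)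
        = (‖x i‖⁻¹ * ‖y i‖⁻¹) * (⟪f (x i) - f a, f (y i) - f a⟫ - ⟪x i - a, y i - a⟫) := by ring
    have e' := mul_le_mul_of_nonneg_left h (by positivity : 0 ≤ ‖x i‖⁻¹ * ‖y i‖⁻¹)
    have e3 : ∀ t : ℝ, |(‖x i‖⁻¹ * ‖y i‖⁻¹) * t| = (‖x i‖⁻¹ * ‖y i‖⁻¹) * |t| := fun t => by
      rw [abs_mul, abs_of_nonneg (by positivity : 0 ≤ ‖x i‖⁻¹ * ‖y i‖⁻¹)]
    refine (le_of_eq ?_).trans (e'.trans (le_of_eq ?_))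
    · rw [← e3]
      congr 1
      ring
    · field_simp
  simpa using h0.add h1

theorem norm_le_of_mu {E : Type*} [NormedAddCommGroup E] [InnerProductSpace ℝ E]
    (c' : ℝ) (hc' : 0 < c') (A : Set E) (hmu : 1 / c' ≤ muDir A) (v : E) (K : ℝ) (hK : 0 ≤ K)
    (h : ∀ u, IsClusterDirection A u → |⟪u, v⟫| ≤ K) : ‖v‖ ≤ c' * K := by
  by_cases hv : v = 0
  · subst hv; simp; positivity
  have hn : 0 < ‖v‖ := norm_pos_iff.2 hv
  have h1 : muDir A ≤ sSup {t | ∃ u, IsClusterDirection A u ∧ t = abs ⟪u, ‖v‖⁻¹ • v⟫} := by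
    refine csInf_le ⟨0, ?_⟩ ⟨‖v‖⁻¹ • v, ?_, rfl⟩
    · rintro s ⟨e, -, rfl⟩
      refine Real.sSup_nonneg ?_
      rintro t ⟨u, -, rfl⟩
      exact abs_nonneg _
    · rw [norm_smul, norm_inv, norm_norm, inv_mul_cancel₀ hn.ne']
  have h2 : sSup {t | ∃ u, IsClusterDirection A u ∧ t = abs ⟪u, ‖v‖⁻¹ • v⟫} ≤ ‖v‖⁻¹ * K := by
    refine Real.sSup_le ?_ (by positivity)
    rintro t ⟨u, hu, rfl⟩
    rw [inner_smul_right, abs_mul, abs_of_nonneg (by positivity)]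
    exact mul_le_mul_of_nonneg_left (h u hu) (by positivity)
  have h3 := hmu.trans (h1.trans h2)
  rw [div_le_iff₀ hc', inv_mul_eq_div, div_mul_eq_mul_div, le_div_iff₀ hn] at h3
  linarith

theorem norm_of_cluster {E : Type*} [NormedAddCommGroup E] [NormedSpace ℝ E]
    (x : ℕ → E) (hx : Tendsto (fun j => ‖x j‖) atTop atTop) (u : E)
    (hu : Tendsto (fun j => ‖x j‖⁻¹ • x j) atTop (nhds u)) : ‖u‖ = 1 := by
  refine tendsto_nhds_unique hu.norm (tendsto_const_nhds.congr' ?_)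
  filter_upwards [hx.eventually (eventually_gt_atTop 0)] with j hj
  rw [norm_smul, norm_inv, norm_norm, inv_mul_cancel₀ hj.ne']

theorem norm_linComb_aux {E F ι : Type*}
    [NormedAddCommGroup E] [InnerProductSpace ℝ E]
    [NormedAddCommGroup F] [InnerProductSpace ℝ F]
    (p : ι → E) (q : ι → F) (h : ∀ i j, ⟪q i, q j⟫ = ⟪p i, p j⟫) (m : ι →₀ ℝ) :
    ‖Finsupp.linearCombination ℝ q m‖ = ‖Finsupp.linearCombination ℝ p m‖ := by
  have : ‖Finsupp.linearCombination ℝ q m‖ ^ 2 = ‖Finsupp.linearCombination ℝ p m‖ ^ 2 := by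
    rw [← real_inner_self_eq_norm_sq, ← real_inner_self_eq_norm_sq]
    simp only [Finsupp.linearCombination_apply, Finsupp.sum, sum_inner, inner_sum,
      inner_smul_left, inner_smul_right, h]
  exact (sq_eq_sq₀ (norm_nonneg _) (norm_nonneg _)).1 this

theorem exists_U_aux {E F ι : Type*}
    [NormedAddCommGroup E] [InnerProductSpace ℝ E] [CompleteSpace E]
    [NormedAddCommGroup F] [InnerProductSpace ℝ F] [CompleteSpace F]
    (p : ι → E) (q : ι → F) (h : ∀ i j, ⟪q i, q j⟫ = ⟪p i, p j⟫)
    (hp : ∀ v : E, (∀ i, ⟪p i, v⟫ = 0) → v = 0) :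
    ∃ U : E →ₗᵢ[ℝ] F, ∀ i, U (p i) = q i := by
  have hd : DenseRange (Finsupp.linearCombination ℝ p) := by
    have h1 : (Submodule.span ℝ (Set.range p)).topologicalClosure = ⊤ := by
      rw [Submodule.topologicalClosure_eq_top_iff, Submodule.eq_bot_iff]
      intro v hv
      refine hp v fun i => ?_
      exact (Submodule.mem_orthogonal _ _).1 hv _ (Submodule.subset_span ⟨i, rfl⟩)
    have h2 := (Submodule.dense_iff_topologicalClosure_eq_top).2 h1
    rw [← Finsupp.range_linearCombination] at h2
    exact h2
  have hn := norm_linComb_aux p q h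
  have he := LinearMap.extendOfNorm_eq (f := Finsupp.linearCombination ℝ q)
    (e := Finsupp.linearCombination ℝ p) hd ⟨1, fun x => by rw [hn, one_mul]⟩
  set L := LinearMap.extendOfNorm (Finsupp.linearCombination ℝ q) (Finsupp.linearCombination ℝ p)
  refine ⟨⟨L.toLinearMap, ?_⟩, fun i => ?_⟩
  · intro x
    refine hd.induction_on (p := fun x => ‖L x‖ = ‖x‖) x
      (isClosed_eq (by fun_prop) (by fun_prop)) ?_
    intro m
    rw [he, hn]
  · have := he (Finsupp.single i 1)
    simpa using this

theorem proj_aux {E F : Type*}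
    [NormedAddCommGroup E] [InnerProductSpace ℝ E] [CompleteSpace E]
    [NormedAddCommGroup F] [InnerProductSpace ℝ F] [CompleteSpace F]
    (U : E →ₗᵢ[ℝ] F) (v : F) :
    projOntoRange U v = U (ContinuousLinearMap.adjoint U.toContinuousLinearMap v) := by
  unfold projOntoRange
  haveI : CompleteSpace (⊤ : Submodule ℝ E) :=
    completeSpace_coe_iff_isComplete.2 (by simpa using completeSpace_iff_isComplete_univ.1 ‹_›)
  haveI : CompleteSpace (Submodule.map U.toLinearMap (⊤ : Submodule ℝ E)) :=
    U.completeSpace_map ⊤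
  apply Submodule.eq_starProjection_of_mem_of_inner_eq_zero
  · exact ⟨_, trivial, rfl⟩
  · rintro _ ⟨z, -, rfl⟩
    have h1 := ContinuousLinearMap.adjoint_inner_left U.toContinuousLinearMap z v
    have h2 := U.inner_map_map (ContinuousLinearMap.adjoint U.toContinuousLinearMap v) z
    change ⟪_ - _, U z⟫ = 0
    rw [inner_sub_left, h2, h1]
    exact sub_self _

/-- Theorem 4.11: if `A ⊆ E` is unbounded with `μ(A) ≥ 1/c'` and `f : A → F` is an
`ε`-nearisometry, then there are a linear isometry `U : E → F` and `w ∈ U(E)` such that,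
with `T x = U x + w` and `P : F → U(E)` the orthogonal projection,
`|P (f x) - T x| ≤ √2 c' ε` for all `x ∈ A`. -/
theorem exists_isometry_approx_projection {E F : Type*}
    [NormedAddCommGroup E] [InnerProductSpace ℝ E] [CompleteSpace E]
    [NormedAddCommGroup F] [InnerProductSpace ℝ F] [CompleteSpace F]
    (c' : ℝ) (hc' : 0 < c') (A : Set E) (hA : ¬ IsBounded A) (hmu : 1 / c' ≤ muDir A)
    (f : E → F) (ε : ℝ) (hε : 0 ≤ ε) (hf : IsNearisometryOn f A ε) :
    ∃ U : E →ₗᵢ[ℝ] F, ∃ w ∈ Submodule.map U.toLinearMap (⊤ : Submodule ℝ E),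
      ∀ x ∈ A, ‖projOntoRange U (f x) - (U x + w)‖ ≤ Real.sqrt 2 * c' * ε := by
  obtain ⟨a, ha⟩ : A.Nonempty := by
    rw [Set.nonempty_iff_ne_empty]
    rintro rfl
    exact hA isBounded_empty
  choose X hXA hXn hXd using fun u : {u : E // IsClusterDirection A u} => u.2
  have hcau : ∀ u, ∃ q : F,
      Tendsto (fun j => ‖X u j‖⁻¹ • (f (X u j) - f a)) atTop (nhds q) := by
    intro u
    refine cauchySeq_tendsto_of_complete ?_
    rw [cauchySeq_iff_tendsto_dist_atTop_0, ← prod_atTop_atTop_eq]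
    have t1 := tendsto_fst (f := (atTop : Filter ℕ)) (g := (atTop : Filter ℕ))
    have t2 := tendsto_snd (f := (atTop : Filter ℕ)) (g := (atTop : Filter ℕ))
    have h := fun (s t : ℕ × ℕ → ℕ) (hs : Tendsto s (atTop ×ˢ atTop) atTop)
        (ht : Tendsto t (atTop ×ˢ atTop) atTop) =>
      inner_lim_aux A f ε hε hf a ha (atTop ×ˢ atTop : Filter (ℕ × ℕ))
        (fun i => X u (s i)) (fun i => X u (t i)) (fun i => hXA _ _) (fun i => hXA _ _)
        ((hXn u).comp hs) ((hXn u).comp ht) u u ((hXd u).comp hs) ((hXd u).comp ht)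
    have h2 := ((h _ _ t1 t1).sub ((h _ _ t1 t2).const_mul 2)).add (h _ _ t2 t2)
    have h3 := (Real.continuous_sqrt.tendsto _).comp h2
    have e0 : ⟪(u : E), (u : E)⟫ - 2 * ⟪(u : E), (u : E)⟫ + ⟪(u : E), (u : E)⟫ = 0 := by ring
    rw [e0, Real.sqrt_zero] at h3
    refine h3.congr fun i => ?_
    simp only [Function.comp_apply]
    rw [real_inner_self_eq_norm_sq, real_inner_self_eq_norm_sq, ← norm_sub_sq_real,
      Real.sqrt_sq (norm_nonneg _), dist_eq_norm]
  choose q hq using hcau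
  have hinner : ∀ u v, ⟪q u, q v⟫ = ⟪(u : E), (v : E)⟫ := fun u v =>
    tendsto_nhds_unique ((hq u).inner (hq v))
      (inner_lim_aux A f ε hε hf a ha atTop (X u) (X v) (hXA u) (hXA v) (hXn u) (hXn v) u v
        (hXd u) (hXd v))
  obtain ⟨U, hU⟩ := exists_U_aux (fun u : {u : E // IsClusterDirection A u} => (u : E)) q hinner (by
    intro v hv
    have := norm_le_of_mu c' hc' A hmu v 0 le_rfl (fun u hu => by
      have := hv ⟨u, hu⟩
      simp only at this
      rw [this, abs_zero])
    simpa using this)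
  set g : E → E := fun x => ContinuousLinearMap.adjoint U.toContinuousLinearMap (f x) - x with hg
  have hgd : ∀ x ∈ A, ∀ y ∈ A, ‖g x - g y‖ ≤ c' * (2 * ε) := by
    intro x hx y hy
    refine norm_le_of_mu c' hc' A hmu _ _ (by positivity) ?_
    intro u₀ hu₀
    set u : {u : E // IsClusterDirection A u} := ⟨u₀, hu₀⟩ with hu
    have hr : Tendsto (fun j => ‖X u j‖⁻¹) atTop (nhds 0) := tendsto_inv_atTop_zero.comp (hXn u)
    have hr0 : ∀ᶠ j in atTop, 0 < ‖X u j‖⁻¹ := by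
      filter_upwards [(hXn u).eventually (eventually_gt_atTop 0)] with j hj
      positivity
    have hu1 : ‖(u : E)‖ = 1 := norm_of_cluster (X u) (hXn u) _ (hXd u)
    have hq1 : ‖q u‖ = 1 := by rw [← hU, U.norm_map, hu1]
    have b1 := busemann_aux _ hr hr0 (X u) u hu1 (hXd u) x y
    have b2 := busemann_aux _ hr hr0 (fun j => f (X u j) - f a) (q u) hq1 (hq u)
      (f x - f a) (f y - f a)
    simp only [sub_sub_sub_cancel_right] at b2
    have b3 := le_of_tendsto' (b2.sub b1).abs (b := 2 * ε) (by
      intro j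
      have h1 := abs_le.1 (hf _ (hXA u j) x hx)
      have h2 := abs_le.1 (hf _ (hXA u j) y hy)
      rw [abs_le]
      constructor <;> linarith)
    have e : ⟪u₀, g x - g y⟫ = -(⟪q u, f y - f x⟫ - ⟪(u : E), y - x⟫) := by
      have e1 : ∀ w, ⟪u₀, ContinuousLinearMap.adjoint U.toContinuousLinearMap w⟫ = ⟪q u, w⟫ := by
        intro w
        rw [ContinuousLinearMap.adjoint_inner_right, ← hU]
        rfl
      simp only [hg, inner_sub_right, e1]
      simp only [hu]
      ring
    rw [e, abs_neg]
    exact b3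
  obtain ⟨c, hc⟩ := jung_aux (g '' A) ⟨g a, a, ha, rfl⟩ (c' * (2 * ε)) (by
    rintro _ ⟨x, hx, rfl⟩ _ ⟨y, hy, rfl⟩
    exact hgd x hx y hy)
  refine ⟨U, U c, ⟨c, trivial, rfl⟩, fun x hx => ?_⟩
  have h := hc (g x) ⟨x, hx, rfl⟩
  rw [proj_aux, ← map_add, ← map_sub, U.norm_map, ← sub_sub]
  change ‖g x - c‖ ≤ _
  refine abs_le_of_sq_le_sq' ?_ (by positivity) |>.2
  rw [mul_pow, mul_pow, Real.sq_sqrt (by norm_num)]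
  nlinarith
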